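/- arXiv:2111.01847 — 8 statements merged into one kernel-verified Lean document; each statement's English description precedes it below -/
import Mathlib

section
/- Let A be a real d×d matrix with singular value decomposition A = Σ_{i=1}^d σ_i u_i v_iᵀ, where (u_i)_{i=1}^d and (v_i)_{i=1}^d are orthonormal families in ℝ^d and the singular values satisfy σ_1 ≥ σ_2 ≥ … ≥ σ_d ≥ 0. Then for every 1 ≤ R ≤ d, the rank-R truncation satisfies ‖A − Σ_{i=1}^R σ_i u_i v_iᵀ‖_F² ≤ (1 − R/d)‖A‖_F²; that is, the Rank-R compressor is a contraction compressor with parameter δ = R/d. -/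
open Matrix Finset

/-- Frobenius norm squared: sum of squares of all entries. -/
noncomputable def frobSq {d : ℕ} (M : Matrix (Fin d) (Fin d) ℝ) : ℝ :=
  ∑ i, ∑ j, (M i j) ^ 2

theorem frobSq_aux {d : ℕ} (c : Fin d → ℝ) (u v : Fin d → Fin d → ℝ)
    (hu : ∀ i j, (∑ s, u i s * u j s) = if i = j then (1 : ℝ) else 0)
    (hv : ∀ i j, (∑ s, v i s * v j s) = if i = j then (1 : ℝ) else 0) :
    frobSq (∑ i, c i • Matrix.vecMulVec (u i) (v i)) = ∑ i, c i ^ 2 := by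
  have h1 : ∀ a b, (∑ i, c i • Matrix.vecMulVec (u i) (v i)) a b
      = ∑ i, c i * (u i a * v i b) := by
    intro a b
    simp [Matrix.sum_apply, Matrix.vecMulVec_apply]
  unfold frobSq
  simp only [h1]
  calc ∑ a, ∑ b, (∑ i, c i * (u i a * v i b)) ^ 2
      = ∑ a, ∑ b, ∑ i, ∑ j, c i * c j * ((u i a * u j a) * (v i b * v j b)) := by
        refine Finset.sum_congr rfl fun a _ => Finset.sum_congr rfl fun b _ => ?_
        rw [sq, Finset.sum_mul_sum]
        refine Finset.sum_congr rfl fun i _ => Finset.sum_congr rfl fun j _ => ?_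
        ring
    _ = ∑ a, ∑ i, ∑ j, ∑ b, c i * c j * ((u i a * u j a) * (v i b * v j b)) := by
        refine Finset.sum_congr rfl fun a _ => ?_
        rw [Finset.sum_comm]
        refine Finset.sum_congr rfl fun i _ => ?_
        rw [Finset.sum_comm]
    _ = ∑ i, ∑ j, ∑ a, ∑ b, c i * c j * ((u i a * u j a) * (v i b * v j b)) := by
        rw [Finset.sum_comm]
        refine Finset.sum_congr rfl fun i _ => ?_
        rw [Finset.sum_comm]
    _ = ∑ i, ∑ j, c i * c j * ((∑ a, u i a * u j a) * (∑ b, v i b * v j b)) := by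
        refine Finset.sum_congr rfl fun i _ => Finset.sum_congr rfl fun j _ => ?_
        rw [Finset.sum_mul_sum, Finset.mul_sum]
        simp only [Finset.mul_sum]
    _ = ∑ i, c i ^ 2 := by
        simp [hu, hv, sq]

/-- The Rank-`R` truncation of an SVD is a contraction compressor with parameter `R/d`. -/
theorem rankR_contraction (d : ℕ) (A : Matrix (Fin d) (Fin d) ℝ)
    (σ : Fin d → ℝ) (u v : Fin d → Fin d → ℝ)
    (hu : ∀ i j, (∑ s, u i s * u j s) = if i = j then (1 : ℝ) else 0)
    (hv : ∀ i j, (∑ s, v i s * v j s) = if i = j then (1 : ℝ) else 0)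
    (hσnonneg : ∀ i, 0 ≤ σ i)
    (hσmono : ∀ i j : Fin d, i ≤ j → σ j ≤ σ i)
    (hA : A = ∑ i, σ i • Matrix.vecMulVec (u i) (v i))
    (R : ℕ) (hR1 : 1 ≤ R) (hRd : R ≤ d) :
    frobSq (A - ∑ i ∈ Finset.univ.filter (fun i : Fin d => (i : ℕ) < R),
        σ i • Matrix.vecMulVec (u i) (v i))
      ≤ (1 - (R : ℝ) / d) * frobSq A := by
  have hD : A - ∑ i ∈ Finset.univ.filter (fun i : Fin d => (i : ℕ) < R),
        σ i • Matrix.vecMulVec (u i) (v i)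
      = ∑ i : Fin d, (if (i : ℕ) < R then 0 else σ i) • Matrix.vecMulVec (u i) (v i) := by
    rw [hA, Finset.sum_filter, ← Finset.sum_sub_distrib]
    refine Finset.sum_congr rfl fun i _ => ?_
    split_ifs <;> simp
  rw [hD, frobSq_aux _ u v hu hv, hA, frobSq_aux _ u v hu hv]
  have hsplit := Finset.sum_filter_add_sum_filter_not (Finset.univ : Finset (Fin d))
    (fun i : Fin d => (i : ℕ) < R) (fun i => σ i ^ 2)
  have hT : ∑ i : Fin d, (if (i : ℕ) < R then 0 else σ i) ^ 2
      = ∑ i ∈ Finset.univ.filter (fun i : Fin d => ¬ (i : ℕ) < R), σ i ^ 2 := by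
    rw [Finset.sum_filter]
    refine Finset.sum_congr rfl fun i _ => ?_
    split_ifs <;> simp_all
  have hc1 : (Finset.univ.filter (fun i : Fin d => (i : ℕ) < R)).card = R := by
    simp [Fin.card_filter_val_lt, hRd]
  have hc2 := Finset.card_filter_add_card_filter_not (s := (Finset.univ : Finset (Fin d)))
    (fun i : Fin d => (i : ℕ) < R)
  rw [hc1, Finset.card_univ, Fintype.card_fin] at hc2
  have hc3 : ((Finset.univ.filter (fun i : Fin d => ¬ (i : ℕ) < R)).card : ℝ) = d - R := by
    rw [eq_sub_iff_add_eq']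
    exact_mod_cast hc2
  have hdbl : ∑ i ∈ Finset.univ.filter (fun i : Fin d => (i : ℕ) < R),
      ∑ j ∈ Finset.univ.filter (fun i : Fin d => ¬ (i : ℕ) < R), σ j ^ 2
      ≤ ∑ i ∈ Finset.univ.filter (fun i : Fin d => (i : ℕ) < R),
      ∑ j ∈ Finset.univ.filter (fun i : Fin d => ¬ (i : ℕ) < R), σ i ^ 2 := by
    refine Finset.sum_le_sum fun i hi => Finset.sum_le_sum fun j hj => ?_
    simp only [Finset.mem_filter, Finset.mem_univ, true_and] at hi hj
    have hij : i ≤ j := by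
      rw [Fin.le_def]; omega
    exact pow_le_pow_left₀ (hσnonneg j) (hσmono i j hij) 2
  simp only [Finset.sum_const, nsmul_eq_mul] at hdbl
  rw [← Finset.mul_sum, hc1, hc3] at hdbl
  rw [hT, ← hsplit]
  have hd : (0 : ℝ) < d := by
    have : 0 < d := by omega
    exact_mod_cast this
  rw [one_sub_div hd.ne', div_mul_eq_mul_div, le_div_iff₀ hd]
  linarith
end

section
/- Let A be a real d×d matrix with singular value decomposition A = Σ_{i=1}^d σ_i u_i v_iᵀ, where (u_i) and (v_i) are orthonormal families in ℝ^d and σ_1 ≥ … ≥ σ_d ≥ 0. Fix 1 ≤ R ≤ d, constants a_i, b_i > 0 for i ∈ [R], and parameters ω₁, ω₂ ≥ 0. Let p_1, …, p_R, q_1, …, q_R : Ω → ℝ^d be mutually independent square-integrable random vectors on a probability space (Ω, 𝓕, ℙ) satisfying E[p_i] = a_i u_i, E‖p_i‖² ≤ (ω₁ + 1)a_i², E[q_i] = b_i v_i, and E‖q_i‖² ≤ (ω₂ + 1)b_i² for every i ∈ [R]. Define the random matrix 𝒞₁(A) := Σ_{i=1}^R σ_i p_i q_iᵀ / (a_i b_i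 (ω₁+1)(ω₂+1)). Then E‖𝒞₁(A) − A‖_F² ≤ (1 − R/(d(ω₁+1)(ω₂+1)))‖A‖_F²; that is, 𝒞₁ is a contraction compressor with parameter R/(d(ω₁+1)(ω₂+1)). -/
open Matrix Finset MeasureTheory ProbabilityTheory

lemma frobSq_aux_s3 {d : ℕ} (S T : Finset (Fin d)) (c σ : Fin d → ℝ)
    (x y u v : Fin d → Fin d → ℝ) :
    frobSq ((∑ i ∈ S, c i • Matrix.vecMulVec (x i) (y i)) -
        ∑ i ∈ T, σ i • Matrix.vecMulVec (u i) (v i)) =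
      (∑ i ∈ S, ∑ j ∈ S, c i * c j * ((∑ s, x i s * x j s) * (∑ t, y i t * y j t)))
      - 2 * (∑ i ∈ S, ∑ k ∈ T, c i * σ k * ((∑ s, x i s * u k s) * (∑ t, y i t * v k t)))
      + ∑ i ∈ T, ∑ j ∈ T, σ i * σ j * ((∑ s, u i s * u j s) * (∑ t, v i t * v j t)) := by
  have key : ∀ (S T : Finset (Fin d)) (c σ : Fin d → ℝ) (x y u v : Fin d → Fin d → ℝ),
      ∑ i ∈ S, ∑ k ∈ T, c i * σ k * ((∑ s, x i s * u k s) * (∑ t, y i t * v k t)) =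
      ∑ s, ∑ t, (∑ i ∈ S, c i * (x i s * y i t)) * (∑ k ∈ T, σ k * (u k s * v k t)) := by
    intro S T c σ x y u v
    simp_rw [Finset.sum_mul_sum, Finset.mul_sum]
    symm
    calc _ = ∑ s, ∑ i ∈ S, ∑ t, ∑ k ∈ T, c i * (x i s * y i t) * (σ k * (u k s * v k t)) := by
          refine Finset.sum_congr rfl fun s _ => ?_
          rw [Finset.sum_comm]
      _ = ∑ i ∈ S, ∑ s, ∑ t, ∑ k ∈ T, c i * (x i s * y i t) * (σ k * (u k s * v k t)) := by
          rw [Finset.sum_comm]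
      _ = ∑ i ∈ S, ∑ s, ∑ k ∈ T, ∑ t, c i * (x i s * y i t) * (σ k * (u k s * v k t)) := by
          refine Finset.sum_congr rfl fun i _ => Finset.sum_congr rfl fun s _ => ?_
          rw [Finset.sum_comm]
      _ = ∑ i ∈ S, ∑ k ∈ T, ∑ s, ∑ t, c i * (x i s * y i t) * (σ k * (u k s * v k t)) := by
          refine Finset.sum_congr rfl fun i _ => ?_
          rw [Finset.sum_comm]
      _ = _ := by
          refine Finset.sum_congr rfl fun i _ => Finset.sum_congr rfl fun k _ =>
            Finset.sum_congr rfl fun s _ => Finset.sum_congr rfl fun t _ => ?_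
          ring
  rw [key, key, key]
  unfold frobSq
  rw [Finset.mul_sum, ← Finset.sum_sub_distrib, ← Finset.sum_add_distrib]
  refine Finset.sum_congr rfl fun s _ => ?_
  rw [Finset.mul_sum, ← Finset.sum_sub_distrib, ← Finset.sum_add_distrib]
  refine Finset.sum_congr rfl fun t _ => ?_
  simp only [Matrix.sub_apply, Matrix.sum_apply, Matrix.smul_apply, Matrix.vecMulVec_apply,
    smul_eq_mul]
  ring

lemma top_sum_aux {d : ℕ} (σ : Fin d → ℝ) (h0 : ∀ i, 0 ≤ σ i)
    (hm : ∀ i j : Fin d, i ≤ j → σ j ≤ σ i) (R : ℕ) (hR1 : 1 ≤ R) (hRd : R ≤ d) :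
    (R : ℝ) * ∑ i, σ i ^ 2 ≤
      d * ∑ i ∈ Finset.univ.filter (fun i : Fin d => (i : ℕ) < R), σ i ^ 2 := by
  set S := Finset.univ.filter (fun i : Fin d => (i : ℕ) < R) with hS
  have hcard : S.card = R := by
    rw [hS, Fin.card_filter_val_lt]; omega
  have hcardc : ((Sᶜ).card : ℝ) = d - R := by
    rw [Finset.card_compl, hcard, Fintype.card_fin, Nat.cast_sub hRd]
  let m : Fin d := ⟨R - 1, by omega⟩
  have h1 : (R : ℝ) * σ m ^ 2 ≤ ∑ i ∈ S, σ i ^ 2 := by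
    have := Finset.card_nsmul_le_sum S (fun i => σ i ^ 2) (σ m ^ 2) (by
      intro i hi
      have hi' : (i : ℕ) < R := by simpa [hS] using hi
      exact pow_le_pow_left₀ (h0 _) (hm i m (by rw [Fin.le_def]; simp only [m]; omega)) 2)
    rwa [hcard, nsmul_eq_mul] at this
  have h2 : ∑ i ∈ Sᶜ, σ i ^ 2 ≤ (d - R : ℝ) * σ m ^ 2 := by
    have := Finset.sum_le_card_nsmul Sᶜ (fun i => σ i ^ 2) (σ m ^ 2) (by
      intro i hi
      have hi' : R ≤ (i : ℕ) := by simpa [hS] using hi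
      exact pow_le_pow_left₀ (h0 _) (hm m i (by rw [Fin.le_def]; simp only [m]; omega)) 2)
    rwa [nsmul_eq_mul, hcardc] at this
  rw [← Finset.sum_add_sum_compl S]
  have hdR : (0 : ℝ) ≤ d - R := by
    have : (R : ℝ) ≤ d := by exact_mod_cast hRd
    linarith
  have e1 := mul_le_mul_of_nonneg_left h1 hdR
  have e2 := mul_le_mul_of_nonneg_left h2 (Nat.cast_nonneg (α := ℝ) R)
  nlinarith

/-- Proposition 3.2: the composition of the Rank-`R` compressor with unbiased compressors
applied to the (scaled) singular vectors is a contraction compressor with parameter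
`R / (d (ω₁+1)(ω₂+1))`. -/
theorem composite_rankR_unbiased_contraction (d : ℕ)
    {Ω : Type*} [MeasureSpace Ω] [IsProbabilityMeasure (ℙ : Measure Ω)]
    (A : Matrix (Fin d) (Fin d) ℝ)
    (σ : Fin d → ℝ) (u v : Fin d → Fin d → ℝ)
    (hu : ∀ i j, (∑ s, u i s * u j s) = if i = j then (1 : ℝ) else 0)
    (hv : ∀ i j, (∑ s, v i s * v j s) = if i = j then (1 : ℝ) else 0)
    (hσnonneg : ∀ i, 0 ≤ σ i)
    (hσmono : ∀ i j : Fin d, i ≤ j → σ j ≤ σ i)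
    (hA : A = ∑ i, σ i • Matrix.vecMulVec (u i) (v i))
    (R : ℕ) (hR1 : 1 ≤ R) (hRd : R ≤ d)
    (a b : Fin d → ℝ) (ha : ∀ i : Fin d, (i : ℕ) < R → 0 < a i)
    (hb : ∀ i : Fin d, (i : ℕ) < R → 0 < b i)
    (ω₁ ω₂ : ℝ) (hω₁ : 0 ≤ ω₁) (hω₂ : 0 ≤ ω₂)
    (p q : Fin d → Ω → (Fin d → ℝ))
    (hpmeas : ∀ i, Measurable (p i)) (hqmeas : ∀ i, Measurable (q i))
    (hpint : ∀ i, Integrable (p i)) (hqint : ∀ i, Integrable (q i))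
    (hpsqint : ∀ i, Integrable (fun ω => ∑ s, (p i ω s) ^ 2))
    (hqsqint : ∀ i, Integrable (fun ω => ∑ s, (q i ω s) ^ 2))
    (hindep : iIndepFun
      (Sum.elim (fun i : {i : Fin d // (i : ℕ) < R} => p i.1)
                (fun i : {i : Fin d // (i : ℕ) < R} => q i.1)) ℙ)
    (hpmean : ∀ i : Fin d, (i : ℕ) < R → (∫ ω, p i ω) = a i • u i)
    (hqmean : ∀ i : Fin d, (i : ℕ) < R → (∫ ω, q i ω) = b i • v i)
    (hpsq : ∀ i : Fin d, (i : ℕ) < R →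
      (∫ ω, ∑ s, (p i ω s) ^ 2) ≤ (ω₁ + 1) * (a i) ^ 2)
    (hqsq : ∀ i : Fin d, (i : ℕ) < R →
      (∫ ω, ∑ s, (q i ω s) ^ 2) ≤ (ω₂ + 1) * (b i) ^ 2) :
    ∫ ω, frobSq ((∑ i ∈ Finset.univ.filter (fun i : Fin d => (i : ℕ) < R),
        (σ i / (a i * b i * (ω₁ + 1) * (ω₂ + 1))) •
          Matrix.vecMulVec (p i ω) (q i ω)) - A)
      ≤ (1 - (R : ℝ) / (d * (ω₁ + 1) * (ω₂ + 1))) * frobSq A := by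
  set S := Finset.univ.filter (fun i : Fin d => (i : ℕ) < R) with hS
  have hmem : ∀ i, i ∈ S ↔ (i : ℕ) < R := by intro i; simp [hS]
  have hpm : ∀ i s, Measurable (fun ω => p i ω s) := fun i s =>
    (measurable_pi_apply s).comp (hpmeas i)
  have hqm : ∀ i s, Measurable (fun ω => q i ω s) := fun i s =>
    (measurable_pi_apply s).comp (hqmeas i)
  -- square integrability of coordinates
  have L2 : ∀ (f : Ω → Fin d → ℝ), (∀ s, Measurable (fun ω => f ω s)) →
      Integrable (fun ω => ∑ s, (f ω s) ^ 2) → ∀ s, MemLp (fun ω => f ω s) 2 ℙ := by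
    intro f hf hi s
    rw [memLp_two_iff_integrable_sq (hf s).aestronglyMeasurable]
    refine hi.mono ((hf s).pow_const 2).aestronglyMeasurable (ae_of_all _ fun ω => ?_)
    rw [Real.norm_of_nonneg (sq_nonneg _),
      Real.norm_of_nonneg (Finset.sum_nonneg fun _ _ => sq_nonneg _)]
    exact Finset.single_le_sum (f := fun s => (f ω s) ^ 2) (fun _ _ => sq_nonneg _)
      (Finset.mem_univ s)
  have hpL := fun i => L2 (p i) (hpm i) (hpsqint i)
  have hqL := fun i => L2 (q i) (hqm i) (hqsqint i)
  have hpp : ∀ i j, Integrable (fun ω => ∑ s, p i ω s * p j ω s) := fun i j =>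
    integrable_finsetSum _ fun s _ => (hpL i s).integrable_mul (hpL j s)
  have hqq : ∀ i j, Integrable (fun ω => ∑ s, q i ω s * q j ω s) := fun i j =>
    integrable_finsetSum _ fun s _ => (hqL i s).integrable_mul (hqL j s)
  have hp1 : ∀ i s, Integrable (fun ω => p i ω s) := fun i s => (hpL i s).integrable one_le_two
  have hq1 : ∀ i s, Integrable (fun ω => q i ω s) := fun i s => (hqL i s).integrable one_le_two
  have hpu : ∀ i k, Integrable (fun ω => ∑ s, p i ω s * u k s) := fun i k =>
    integrable_finsetSum _ fun s _ => (hp1 i s).mul_const _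
  have hqv : ∀ i k, Integrable (fun ω => ∑ s, q i ω s * v k s) := fun i k =>
    integrable_finsetSum _ fun s _ => (hq1 i s).mul_const _
  -- means
  have hpE : ∀ i : Fin d, (i : ℕ) < R → ∀ s, ∫ ω, p i ω s = a i * u i s := by
    intro i hi s
    have := congrFun (hpmean i hi) s
    rw [← eval_integral (fun s => hp1 i s) s, this]; simp
  have hqE : ∀ i : Fin d, (i : ℕ) < R → ∀ s, ∫ ω, q i ω s = b i * v i s := by
    intro i hi s
    have := congrFun (hqmean i hi) s
    rw [← eval_integral (fun s => hq1 i s) s, this]; simp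
  -- independence
  have hFm : ∀ k, Measurable ((Sum.elim (fun i : {i : Fin d // (i : ℕ) < R} => p i.1)
                (fun i : {i : Fin d // (i : ℕ) < R} => q i.1)) k) := by
    rintro (k | k)
    · exact hpmeas _
    · exact hqmeas _
  have hind2 : ∀ (F G : (Fin d → ℝ) → (Fin d → ℝ) → ℝ), Measurable (Function.uncurry F) →
      Measurable (Function.uncurry G) → ∀ i j : Fin d, (i : ℕ) < R → (j : ℕ) < R →
      IndepFun (fun ω => F (p i ω) (p j ω)) (fun ω => G (q i ω) (q j ω)) ℙ := by
    intro F G hF hG i j hi hj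
    let SS : Finset ({i : Fin d // (i : ℕ) < R} ⊕ {i : Fin d // (i : ℕ) < R}) :=
      {Sum.inl ⟨i, hi⟩, Sum.inl ⟨j, hj⟩}
    let TT : Finset ({i : Fin d // (i : ℕ) < R} ⊕ {i : Fin d // (i : ℕ) < R}) :=
      {Sum.inr ⟨i, hi⟩, Sum.inr ⟨j, hj⟩}
    have h := hindep.indepFun_finset SS TT (by simp [SS, TT]) hFm
    let f1 : (SS → (Fin d → ℝ)) → ℝ := fun z =>
      F (z ⟨Sum.inl ⟨i, hi⟩, by simp [SS]⟩) (z ⟨Sum.inl ⟨j, hj⟩, by simp [SS]⟩)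
    let g1 : (TT → (Fin d → ℝ)) → ℝ := fun z =>
      G (z ⟨Sum.inr ⟨i, hi⟩, by simp [TT]⟩) (z ⟨Sum.inr ⟨j, hj⟩, by simp [TT]⟩)
    have hf1 : Measurable f1 :=
      Measurable.comp (g := Function.uncurry F) (f := fun z : SS → (Fin d → ℝ) =>
        (z ⟨Sum.inl ⟨i, hi⟩, by simp [SS]⟩, z ⟨Sum.inl ⟨j, hj⟩, by simp [SS]⟩)) hF
        ((measurable_pi_apply _).prodMk (measurable_pi_apply _))
    have hg1 : Measurable g1 :=
      Measurable.comp (g := Function.uncurry G) (f := fun z : TT → (Fin d → ℝ) =>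
        (z ⟨Sum.inr ⟨i, hi⟩, by simp [TT]⟩, z ⟨Sum.inr ⟨j, hj⟩, by simp [TT]⟩)) hG
        ((measurable_pi_apply _).prodMk (measurable_pi_apply _))
    exact h.comp hf1 hg1
  have hdot : Measurable (Function.uncurry (fun x y : Fin d → ℝ => ∑ s, x s * y s)) := by
    unfold Function.uncurry; fun_prop
  have hdc : ∀ w : Fin d → ℝ,
      Measurable (Function.uncurry (fun x _ : Fin d → ℝ => ∑ s, x s * w s)) := by
    intro w; unfold Function.uncurry; fun_prop
  have hI1 : ∀ i j : Fin d, (i : ℕ) < R → (j : ℕ) < R →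
      IndepFun (fun ω => ∑ s, p i ω s * p j ω s) (fun ω => ∑ s, q i ω s * q j ω s) ℙ :=
    fun i j hi hj => hind2 _ _ hdot hdot i j hi hj
  have hI2 : ∀ i k : Fin d, (i : ℕ) < R →
      IndepFun (fun ω => ∑ s, p i ω s * u k s) (fun ω => ∑ s, q i ω s * v k s) ℙ :=
    fun i k hi => hind2 _ _ (hdc (u k)) (hdc (v k)) i i hi hi
  have hint1 : ∀ i ∈ S, ∀ j ∈ S, Integrable (fun ω =>
      (∑ s, p i ω s * p j ω s) * (∑ s, q i ω s * q j ω s)) := fun i hi j hj =>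
    (hI1 i j ((hmem i).1 hi) ((hmem j).1 hj)).integrable_mul (hpp i j) (hqq i j)
  have hint2 : ∀ i ∈ S, ∀ k, Integrable (fun ω =>
      (∑ s, p i ω s * u k s) * (∑ s, q i ω s * v k s)) := fun i hi k =>
    (hI2 i k ((hmem i).1 hi)).integrable_mul (hpu i k) (hqv i k)
  -- expectations
  have E2 : ∀ i ∈ S, ∀ k, ∫ ω, (∑ s, p i ω s * u k s) * (∑ s, q i ω s * v k s) =
      if i = k then a i * b i else 0 := by
    intro i hi k
    have hi' := (hmem i).1 hi
    rw [(hI2 i k hi').integral_fun_mul_eq_mul_integral (hpu i k).aestronglyMeasurable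
      (hqv i k).aestronglyMeasurable]
    rw [integral_finsetSum _ fun s _ => (hp1 i s).mul_const _,
      integral_finsetSum _ fun s _ => (hq1 i s).mul_const _]
    simp_rw [integral_mul_const, hpE i hi', hqE i hi', mul_assoc, ← Finset.mul_sum, hu, hv]
    split_ifs <;> ring
  have E1ne : ∀ i ∈ S, ∀ j ∈ S, i ≠ j →
      ∫ ω, (∑ s, p i ω s * p j ω s) * (∑ s, q i ω s * q j ω s) = 0 := by
    intro i hi j hj hij
    have hi' := (hmem i).1 hi
    have hj' := (hmem j).1 hj
    rw [(hI1 i j hi' hj').integral_fun_mul_eq_mul_integral (hpp i j).aestronglyMeasurable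
      (hqq i j).aestronglyMeasurable]
    have hIp : IndepFun (p i) (p j) ℙ :=
      hindep.indepFun (i := Sum.inl ⟨i, hi'⟩) (j := Sum.inl ⟨j, hj'⟩) (by simpa using hij)
    have : ∫ ω, ∑ s, p i ω s * p j ω s = 0 := by
      have hm2 : ∀ s, Integrable (fun ω => p i ω s * p j ω s) := fun s =>
        (hpL i s).integrable_mul (hpL j s)
      rw [integral_finsetSum _ fun s _ => hm2 s]
      have : ∀ s, ∫ ω, p i ω s * p j ω s = a i * a j * (u i s * u j s) := by
        intro s
        have hIs : IndepFun (fun ω => p i ω s) (fun ω => p j ω s) ℙ :=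
          hIp.comp (measurable_pi_apply s) (measurable_pi_apply s)
        rw [hIs.integral_fun_mul_eq_mul_integral (hp1 i s).aestronglyMeasurable
          (hp1 j s).aestronglyMeasurable, hpE i hi', hpE j hj']
        ring
      simp_rw [this, ← Finset.mul_sum, hu, if_neg hij, mul_zero]
    rw [this, zero_mul]
  have E1eq : ∀ i ∈ S,
      ∫ ω, (∑ s, p i ω s * p i ω s) * (∑ s, q i ω s * q i ω s) ≤
        ((ω₁ + 1) * a i ^ 2) * ((ω₂ + 1) * b i ^ 2) := by
    intro i hi
    have hi' := (hmem i).1 hi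
    rw [(hI1 i i hi' hi').integral_fun_mul_eq_mul_integral (hpp i i).aestronglyMeasurable
      (hqq i i).aestronglyMeasurable]
    have h1 := hpsq i hi'
    have h2 := hqsq i hi'
    simp_rw [pow_two (p i _ _)] at h1
    simp_rw [pow_two (q i _ _)] at h2
    refine mul_le_mul h1 h2 (integral_nonneg fun ω => Finset.sum_nonneg fun _ _ =>
      mul_self_nonneg _) ?_
    positivity
  -- Frobenius norm of A
  have hfA : frobSq A = ∑ i, σ i ^ 2 := by
    have h := frobSq_aux_s3 Finset.univ ∅ σ 0 u v 0 0
    rw [Finset.sum_empty, sub_zero, ← hA] at h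
    rw [h]
    simp only [hu, hv, Finset.sum_empty]
    simp [pow_two]
  set c : Fin d → ℝ := fun i => σ i / (a i * b i * (ω₁ + 1) * (ω₂ + 1)) with hc
  have hexp : ∀ ω, frobSq ((∑ i ∈ S, (σ i / (a i * b i * (ω₁ + 1) * (ω₂ + 1))) •
          Matrix.vecMulVec (p i ω) (q i ω)) - A) =
      (∑ i ∈ S, ∑ j ∈ S, c i * c j *
        ((∑ s, p i ω s * p j ω s) * (∑ t, q i ω t * q j ω t)))
      - 2 * (∑ i ∈ S, ∑ k, c i * σ k *
        ((∑ s, p i ω s * u k s) * (∑ t, q i ω t * v k t)))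
      + frobSq A := by
    intro ω
    have h := frobSq_aux_s3 S Finset.univ c σ (fun i => p i ω) (fun i => q i ω) u v
    rw [← hA] at h
    rw [h, hfA]
    congr 1
    simp only [hu, hv]
    simp [pow_two]
  simp_rw [hexp]
  have hJ1 : Integrable (fun ω => ∑ i ∈ S, ∑ j ∈ S, c i * c j *
        ((∑ s, p i ω s * p j ω s) * (∑ t, q i ω t * q j ω t))) :=
    integrable_finsetSum _ fun i hi => integrable_finsetSum _ fun j hj =>
      (hint1 i hi j hj).const_mul _
  have hJ2 : Integrable (fun ω => ∑ i ∈ S, ∑ k, c i * σ k *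
        ((∑ s, p i ω s * u k s) * (∑ t, q i ω t * v k t))) :=
    integrable_finsetSum _ fun i hi => integrable_finsetSum _ fun k _ =>
      (hint2 i hi k).const_mul _
  have hJ3 : Integrable (fun ω => (∑ i ∈ S, ∑ j ∈ S, c i * c j *
        ((∑ s, p i ω s * p j ω s) * (∑ t, q i ω t * q j ω t))) -
      2 * (∑ i ∈ S, ∑ k, c i * σ k *
        ((∑ s, p i ω s * u k s) * (∑ t, q i ω t * v k t)))) :=
    hJ1.sub (hJ2.const_mul 2)
  rw [integral_add hJ3 (integrable_const _),
    integral_sub hJ1 (hJ2.const_mul 2), integral_const_mul, integral_const]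
  have hK : 0 < (ω₁ + 1) * (ω₂ + 1) := by positivity
  have B2 : ∫ ω, (∑ i ∈ S, ∑ k, c i * σ k *
        ((∑ s, p i ω s * u k s) * (∑ t, q i ω t * v k t))) =
      (∑ i ∈ S, σ i ^ 2) / ((ω₁ + 1) * (ω₂ + 1)) := by
    rw [integral_finsetSum _ fun i hi => integrable_finsetSum _ fun k _ =>
      (hint2 i hi k).const_mul _, Finset.sum_div]
    refine Finset.sum_congr rfl fun i hi => ?_
    rw [integral_finsetSum _ fun k _ => (hint2 i hi k).const_mul _]
    simp_rw [integral_const_mul, E2 i hi]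
    have h1 := ha i ((hmem i).1 hi)
    have h2 := hb i ((hmem i).1 hi)
    simp only [mul_ite, mul_zero, Finset.sum_ite_eq, Finset.mem_univ, if_true, hc]
    have h3 : ω₁ + 1 ≠ 0 := by positivity
    have h4 : ω₂ + 1 ≠ 0 := by positivity
    field_simp
  have B1 : ∫ ω, (∑ i ∈ S, ∑ j ∈ S, c i * c j *
        ((∑ s, p i ω s * p j ω s) * (∑ t, q i ω t * q j ω t))) ≤
      (∑ i ∈ S, σ i ^ 2) / ((ω₁ + 1) * (ω₂ + 1)) := by
    rw [integral_finsetSum _ fun i hi => integrable_finsetSum _ fun j hj =>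
      (hint1 i hi j hj).const_mul _, Finset.sum_div]
    refine Finset.sum_le_sum fun i hi => ?_
    rw [integral_finsetSum _ fun j hj => (hint1 i hi j hj).const_mul _]
    simp_rw [integral_const_mul]
    rw [Finset.sum_eq_single_of_mem i hi fun j hj hji => by
      rw [E1ne i hi j hj (Ne.symm hji), mul_zero]]
    refine (mul_le_mul_of_nonneg_left (E1eq i hi) (mul_self_nonneg _)).trans (le_of_eq ?_)
    have h1 := ha i ((hmem i).1 hi)
    have h2 := hb i ((hmem i).1 hi)
    have h3 : ω₁ + 1 ≠ 0 := by positivity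
    have h4 : ω₂ + 1 ≠ 0 := by positivity
    simp only [hc]
    field_simp
  rw [B2]
  have hd : (0 : ℝ) < d := by exact_mod_cast (by omega : 0 < d)
  have htop := top_sum_aux σ hσnonneg hσmono R hR1 hRd
  rw [← hS, ← hfA] at htop
  have hfin : (R : ℝ) / (d * (ω₁ + 1) * (ω₂ + 1)) * frobSq A ≤
      (∑ i ∈ S, σ i ^ 2) / ((ω₁ + 1) * (ω₂ + 1)) := by
    rw [mul_assoc (d : ℝ), div_mul_eq_mul_div, div_le_div_iff₀ (by positivity) hK]
    calc _ ≤ _ := mul_le_mul_of_nonneg_right htop hK.le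
      _ = _ := by ring
  simp only [probReal_univ, one_smul]
  linarith
end

section
/- Let (Ω, 𝓕, ℙ) be a probability space, let x, y, z ∈ ℝ^d, let ω ≥ 0 and 0 < η ≤ 1/(ω+1), and let Q : Ω → ℝ^d be a square-integrable random vector with E[Q] = x − z and E‖Q‖² ≤ (ω + 1)‖x − z‖². Then E‖z + ηQ − y‖² ≤ (1 − η)‖z − y‖² + η‖x − y‖². -/
open MeasureTheory ProbabilityTheory

/-- Lemma C.2 (i): one step with an unbiased compressor with variance parameter `ω`
and stepsize `η ≤ 1/(ω+1)`. -/
theorem unbiased_compressor_step (d : ℕ)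
    {Ω : Type*} [MeasureSpace Ω] [IsProbabilityMeasure (ℙ : Measure Ω)]
    (x y z : EuclideanSpace ℝ (Fin d))
    (ω : ℝ) (hω : 0 ≤ ω) (η : ℝ) (hη0 : 0 < η) (hη1 : η ≤ 1 / (ω + 1))
    (Q : Ω → EuclideanSpace ℝ (Fin d))
    (hQint : Integrable Q)
    (hQsqint : Integrable (fun t => ‖Q t‖ ^ 2))
    (hQmean : (∫ t, Q t) = x - z)
    (hQsq : (∫ t, ‖Q t‖ ^ 2) ≤ (ω + 1) * ‖x - z‖ ^ 2) :
    (∫ t, ‖z + η • Q t - y‖ ^ 2) ≤ (1 - η) * ‖z - y‖ ^ 2 + η * ‖x - y‖ ^ 2 := by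
  have h1 : ∀ t, ‖z + η • Q t - y‖ ^ 2
      = ‖z - y‖ ^ 2 + 2 * η * inner ℝ (z - y) (Q t) + η ^ 2 * ‖Q t‖ ^ 2 := by
    intro t
    have : z + η • Q t - y = (z - y) + η • Q t := by abel
    rw [this, norm_add_sq_real, inner_smul_right, norm_smul, mul_pow, Real.norm_eq_abs, sq_abs]
    ring
  have hin : Integrable (fun t => inner ℝ (z - y) (Q t)) := hQint.const_inner (z - y)
  have h2 : (∫ t, inner ℝ (z - y) (Q t)) = inner ℝ (z - y) (x - z) := by
    rw [integral_inner hQint, hQmean]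
  have hA : Integrable (fun t => ‖z - y‖ ^ 2 + 2 * η * inner ℝ (z - y) (Q t)) :=
    (integrable_const _).add (hin.const_mul _)
  have h3 : ‖x - y‖ ^ 2 = ‖z - y‖ ^ 2 + 2 * inner ℝ (z - y) (x - z) + ‖x - z‖ ^ 2 := by
    rw [← norm_add_sq_real]
    congr 2
    abel
  have h4 : η * (ω + 1) ≤ 1 := by
    rwa [le_div_iff₀ (by linarith)] at hη1
  simp_rw [h1]
  rw [integral_add hA (hQsqint.const_mul _), integral_add (integrable_const _) (hin.const_mul _),
    integral_const_mul, integral_const_mul, h2, h3]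
  simp only [integral_const, probReal_univ, one_smul]
  have h5 : η ^ 2 * (∫ t, ‖Q t‖ ^ 2) ≤ η ^ 2 * ((ω + 1) * ‖x - z‖ ^ 2) :=
    mul_le_mul_of_nonneg_left hQsq (sq_nonneg η)
  have h6 : (η * (ω + 1)) * (η * ‖x - z‖ ^ 2) ≤ 1 * (η * ‖x - z‖ ^ 2) :=
    mul_le_mul_of_nonneg_right h4 (by positivity)
  linarith
end

section
/- Let (Ω, 𝓕, ℙ) be a probability space, let x, y, z ∈ ℝ^d, let 0 < δ ≤ 1, and let Q : Ω → ℝ^d be a square-integrable random vector with E‖Q − (x − z)‖² ≤ (1 − δ)‖x − z‖². Then E‖z + Q − y‖² ≤ (1 − δ/4)‖z − y‖² + (6/δ − 7/2)‖x − y‖². -/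
open MeasureTheory ProbabilityTheory

/-- Lemma C.2 (ii): one step with a contraction compressor with parameter `δ`
and stepsize `η = 1`. -/
theorem contraction_compressor_step (d : ℕ)
    {Ω : Type*} [MeasureSpace Ω] [IsProbabilityMeasure (ℙ : Measure Ω)]
    (x y z : EuclideanSpace ℝ (Fin d))
    (δ : ℝ) (hδ0 : 0 < δ) (hδ1 : δ ≤ 1)
    (Q : Ω → EuclideanSpace ℝ (Fin d))
    (hQint : Integrable Q)
    (hQsqint : Integrable (fun t => ‖Q t - (x - z)‖ ^ 2))
    (hQcontr : (∫ t, ‖Q t - (x - z)‖ ^ 2) ≤ (1 - δ) * ‖x - z‖ ^ 2) :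
    (∫ t, ‖z + Q t - y‖ ^ 2)
      ≤ (1 - δ / 4) * ‖z - y‖ ^ 2 + (6 / δ - 7 / 2) * ‖x - y‖ ^ 2 := by
  have hA := norm_nonneg (x - y)
  have hB := norm_nonneg (z - y)
  have hC : ‖x - z‖ ≤ ‖x - y‖ + ‖z - y‖ := by
    have := norm_sub_le (x - y) (z - y)
    simpa using this
  have hC0 := norm_nonneg (x - z)
  set A := ‖x - y‖ with hAdef
  set B := ‖z - y‖
  set C := ‖x - z‖
  have he : Integrable (fun t => ‖Q t - (x - z)‖) :=
    (hQint.sub (integrable_const _)).norm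
  set M := ∫ t, ‖Q t - (x - z)‖ with hM
  set V := ∫ t, ‖Q t - (x - z)‖ ^ 2 with hV
  have hM0 : 0 ≤ M := integral_nonneg fun t => norm_nonneg _
  have hMV : M ^ 2 ≤ V := by
    have h1 : 0 ≤ ∫ t, (‖Q t - (x - z)‖ ^ 2 - (2 * M) * ‖Q t - (x - z)‖ + M ^ 2) :=
      integral_nonneg fun t => by
        have := sq_nonneg (‖Q t - (x - z)‖ - M)
        simp only [Pi.zero_apply]
        nlinarith
    rw [integral_add (by exact hQsqint.sub (he.const_mul _)) (integrable_const _),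
      integral_sub hQsqint (he.const_mul _), integral_const_mul, ← hM, ← hV] at h1
    simp at h1
    nlinarith
  have hI : (∫ t, ‖z + Q t - y‖ ^ 2) ≤ V + 2 * A * M + A ^ 2 := by
    have h1 : (∫ t, ‖z + Q t - y‖ ^ 2) ≤
        ∫ t, (‖Q t - (x - z)‖ ^ 2 + (2 * A) * ‖Q t - (x - z)‖ + A ^ 2) := by
      apply integral_mono_of_nonneg
      · exact Filter.Eventually.of_forall fun t => by positivity
      · exact (hQsqint.add (he.const_mul _)).add (integrable_const _)
      · refine Filter.Eventually.of_forall fun t => ?_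
        have h2 : z + Q t - y = (Q t - (x - z)) + (x - y) := by abel
        have h3 := norm_add_le (Q t - (x - z)) (x - y)
        rw [← h2, ← hAdef] at h3
        have h4 := norm_nonneg (z + Q t - y)
        have h5 := pow_le_pow_left₀ h4 h3 2
        simp only
        nlinarith
    rw [integral_add (by exact hQsqint.add (he.const_mul _)) (integrable_const _),
      integral_add hQsqint (he.const_mul _), integral_const_mul, ← hM, ← hV] at h1
    simpa using h1
  refine hI.trans ?_
  obtain ⟨s, hs0, hs⟩ : ∃ s : ℝ, 0 ≤ s ∧ s ^ 2 = 1 - δ :=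
    ⟨√(1 - δ), Real.sqrt_nonneg _, Real.sq_sqrt (by linarith)⟩
  have hs1 : s ≤ 1 := by nlinarith
  have hV2 : V ≤ (s * (A + B)) ^ 2 := by
    rw [mul_pow, hs]
    refine hQcontr.trans ?_
    have := pow_le_pow_left₀ hC0 hC 2
    exact mul_le_mul_of_nonneg_left this (by linarith)
  have hM2 : M ≤ s * (A + B) :=
    (sq_le_sq₀ hM0 (by positivity)).1 (hMV.trans hV2)
  have hAM : A * M ≤ A * (s * (A + B)) := mul_le_mul_of_nonneg_left hM2 hA
  have key : V + 2 * A * M + A ^ 2 ≤ (s * (A + B)) ^ 2 + 2 * (A * (s * (A + B))) + A ^ 2 := by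
    linarith
  refine key.trans ?_
  have hδ : δ = 1 - s ^ 2 := by linarith
  have hg : 0 ≤ 9 / 8 - 3 / 2 * s + 13 / 8 * s ^ 2 - 1 / 2 * s ^ 3 - 1 / 4 * s ^ 4 := by
    have h3 : s ^ 3 ≤ s ^ 2 := pow_le_pow_of_le_one hs0 hs1 (by norm_num)
    have h4 : s ^ 4 ≤ s ^ 2 := pow_le_pow_of_le_one hs0 hs1 (by norm_num)
    nlinarith [sq_nonneg (s - 6 / 7)]
  have hc : 6 / δ * δ = 6 := by field_simp
  set r := 6 / δ
  have hid : (3 * δ / 4) * ((1 - δ / 4) * B ^ 2 + (r - 7 / 2) * A ^ 2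
      - ((s * (A + B)) ^ 2 + 2 * (A * (s * (A + B))) + A ^ 2))
      = (3 * δ / 4 * B - s * (1 + s) * A) ^ 2
        + (9 / 8 - 3 / 2 * s + 13 / 8 * s ^ 2 - 1 / 2 * s ^ 3 - 1 / 4 * s ^ 4) * A ^ 2 := by
    have : r * δ = 6 := hc
    rw [hδ] at this ⊢
    linear_combination (3 / 4 * A ^ 2) * this
  have hpos : 0 ≤ (3 * δ / 4) * ((1 - δ / 4) * B ^ 2 + (r - 7 / 2) * A ^ 2
      - ((s * (A + B)) ^ 2 + 2 * (A * (s * (A + B))) + A ^ 2)) := by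
    rw [hid]; positivity
  have := nonneg_of_mul_nonneg_right hpos (by positivity : 0 < 3 * δ / 4)
  linarith
end

section
/- Let (Ω, 𝓕, ℙ) be a probability space, let G : ℝ^d → ℝ^{d×d} satisfy ‖G(y) − G(z)‖_F ≤ M₁‖y − z‖ for all y, z ∈ ℝ^d, let L ∈ ℝ^{d×d}, let y, z ∈ ℝ^d, let ω ≥ 0 and 0 < α ≤ 1/(ω+1), and let S : Ω → ℝ^{d×d} be a square-integrable random matrix with E[S] = G(y) − L and E‖S‖_F² ≤ (ω + 1)‖G(y) − L‖_F². Then E‖L + αS − G(z)‖_F² ≤ (1 − α)‖L − G(z)‖_F² + α M₁² ‖y − z‖². -/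
open Matrix MeasureTheory ProbabilityTheory

/-- Frobenius norm. -/
noncomputable def frobNorm {d : ℕ} (M : Matrix (Fin d) (Fin d) ℝ) : ℝ :=
  Real.sqrt (frobSq M)

/-- Lemma C.3 (i): Hessian-coefficient learning step with an unbiased compressor with
variance parameter `ω` and stepsize `α ≤ 1/(ω+1)`. -/
theorem hessian_learning_unbiased_step (d : ℕ)
    {Ω : Type*} [MeasureSpace Ω] [IsProbabilityMeasure (ℙ : Measure Ω)]
    (M₁ : ℝ) (G : EuclideanSpace ℝ (Fin d) → Matrix (Fin d) (Fin d) ℝ)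
    (hG : ∀ y z, frobNorm (G y - G z) ≤ M₁ * ‖y - z‖)
    (L : Matrix (Fin d) (Fin d) ℝ) (y z : EuclideanSpace ℝ (Fin d))
    (ω : ℝ) (hω : 0 ≤ ω) (α : ℝ) (hα0 : 0 < α) (hα1 : α ≤ 1 / (ω + 1))
    (S : Ω → Matrix (Fin d) (Fin d) ℝ)
    (hSint : ∀ j l, Integrable (fun t => S t j l))
    (hSsqint : Integrable (fun t => frobSq (S t)))
    (hSmean : ∀ j l, (∫ t, S t j l) = (G y - L) j l)
    (hSsq : (∫ t, frobSq (S t)) ≤ (ω + 1) * frobSq (G y - L)) :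
    (∫ t, frobSq (L + α • S t - G z))
      ≤ (1 - α) * frobSq (L - G z) + α * M₁ ^ 2 * ‖y - z‖ ^ 2 := by
  have key : ∀ (A X : Matrix (Fin d) (Fin d) ℝ) (c : ℝ), frobSq (A + c • X) =
      frobSq A + 2 * c * (∑ i, ∑ j, A i j * X i j) + c ^ 2 * frobSq X := by
    intro A X c
    simp only [frobSq, Finset.mul_sum, ← Finset.sum_add_distrib]
    refine Finset.sum_congr rfl fun i _ => Finset.sum_congr rfl fun j _ => ?_
    simp only [Matrix.add_apply, Matrix.smul_apply, smul_eq_mul]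
    ring
  have hpt : ∀ t, frobSq (L + α • S t - G z) = frobSq (L - G z)
      + 2 * α * (∑ i, ∑ j, (L - G z) i j * S t i j) + α ^ 2 * frobSq (S t) := by
    intro t
    rw [← key, add_sub_right_comm]
  have hci : Integrable (fun t => ∑ i, ∑ j, (L - G z) i j * S t i j) :=
    integrable_finsetSum _ fun i _ => integrable_finsetSum _ fun j _ =>
      (hSint i j).const_mul _
  have hcross : (∫ t, ∑ i, ∑ j, (L - G z) i j * S t i j)
      = ∑ i, ∑ j, (L - G z) i j * (G y - L) i j := by
    refine (integral_finsetSum _ fun i _ => integrable_finsetSum _ fun j _ =>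
      (hSint i j).const_mul _).trans ?_
    refine Finset.sum_congr rfl fun i _ => ?_
    refine (integral_finsetSum _ fun j _ => (hSint i j).const_mul _).trans ?_
    refine Finset.sum_congr rfl fun j _ => ?_
    exact (integral_const_mul _ _).trans (congrArg _ (hSmean i j))
  have hsplit : ∀ (f g : Ω → ℝ) (c a b : ℝ), Integrable f → Integrable g →
      (∫ t, (c + a * f t + b * g t)) = c + a * (∫ t, f t) + b * ∫ t, g t := by
    intro f g c a b hf hg
    have h1 : Integrable (fun t => c + a * f t) := (integrable_const _).add (hf.const_mul _)
    rw [integral_add h1 (hg.const_mul _),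
      integral_add (integrable_const _) (hf.const_mul _), integral_const_mul,
      integral_const_mul]
    simp
  have hI : (∫ t, frobSq (L + α • S t - G z)) = frobSq (L - G z)
      + 2 * α * (∑ i, ∑ j, (L - G z) i j * (G y - L) i j)
      + α ^ 2 * ∫ t, frobSq (S t) := by
    rw [← hcross]
    exact (integral_congr_ae (Filter.Eventually.of_forall hpt)).trans
      (hsplit _ _ _ _ _ hci hSsqint)
  have hk := key (L - G z) (G y - L) 1
  have he : L - G z + (1 : ℝ) • (G y - L) = G y - G z := by
    rw [one_smul]; abel
  rw [he] at hk
  have hnn : ∀ X : Matrix (Fin d) (Fin d) ℝ, 0 ≤ frobSq X := fun X =>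
    Finset.sum_nonneg fun i _ => Finset.sum_nonneg fun j _ => sq_nonneg _
  have hL : frobSq (G y - G z) ≤ M₁ ^ 2 * ‖y - z‖ ^ 2 := by
    have h1 := hG y z
    rw [frobNorm] at h1
    have h2 := pow_le_pow_left₀ (Real.sqrt_nonneg _) h1 2
    rwa [Real.sq_sqrt (hnn _), mul_pow] at h2
  have hα : α * (ω + 1) ≤ 1 := by
    rwa [le_div_iff₀ (by linarith)] at hα1
  have h3 : α ^ 2 * ∫ t, frobSq (S t) ≤ α * frobSq (G y - L) := by
    calc α ^ 2 * ∫ t, frobSq (S t) ≤ α ^ 2 * ((ω + 1) * frobSq (G y - L)) := by gcongr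
      _ = (α * (ω + 1)) * (α * frobSq (G y - L)) := by ring
      _ ≤ 1 * (α * frobSq (G y - L)) :=
        mul_le_mul_of_nonneg_right hα (mul_nonneg hα0.le (hnn _))
      _ = _ := one_mul _
  have h4 := mul_le_mul_of_nonneg_left hL hα0.le
  rw [hk] at h4
  rw [hI]
  linarith
end

section
/- Let (Ω, 𝓕, ℙ) be a probability space, let G : ℝ^d → ℝ^{d×d} satisfy ‖G(y) − G(z)‖_F ≤ M₁‖y − z‖ for all y, z ∈ ℝ^d, let L ∈ ℝ^{d×d}, let y, z ∈ ℝ^d, let 0 < δ ≤ 1, and let S : Ω → ℝ^{d×d} be a square-integrable random matrix with E‖S − (G(y) − L)‖_F² ≤ (1 − δ)‖G(y) − L‖_F². Then E‖L + S − G(z)‖_F² ≤ (1 − δ/4)‖L − G(z)‖_F² + (6/δ − 7/2) M₁² ‖y − z‖². -/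
open Matrix MeasureTheory ProbabilityTheory

theorem frobSq_nonneg' {d : ℕ} (A : Matrix (Fin d) (Fin d) ℝ) : 0 ≤ frobSq A :=
  Finset.sum_nonneg fun _ _ => Finset.sum_nonneg fun _ _ => sq_nonneg _

theorem frobSq_young {d : ℕ} (A B : Matrix (Fin d) (Fin d) ℝ) (a : ℝ) (ha : 0 < a) :
    frobSq (A + B) ≤ (1 + a) * frobSq A + (1 + 1 / a) * frobSq B := by
  unfold frobSq
  simp only [Finset.mul_sum, ← Finset.sum_add_distrib]
  refine Finset.sum_le_sum fun i _ => Finset.sum_le_sum fun j _ => ?_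
  have h : (1 + a) * A i j ^ 2 + (1 + 1 / a) * B i j ^ 2 - (A i j + B i j) ^ 2
      = (a * A i j - B i j) ^ 2 / a := by
    field_simp
    ring
  have h2 : 0 ≤ (a * A i j - B i j) ^ 2 / a := by positivity
  rw [Matrix.add_apply]
  linarith

/-- Lemma C.3 (ii): Hessian-coefficient learning step with a contraction compressor with
parameter `δ` and stepsize `α = 1`. -/
theorem hessian_learning_contraction_step (d : ℕ)
    {Ω : Type*} [MeasureSpace Ω] [IsProbabilityMeasure (ℙ : Measure Ω)]
    (M₁ : ℝ) (G : EuclideanSpace ℝ (Fin d) → Matrix (Fin d) (Fin d) ℝ)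
    (hG : ∀ y z, frobNorm (G y - G z) ≤ M₁ * ‖y - z‖)
    (L : Matrix (Fin d) (Fin d) ℝ) (y z : EuclideanSpace ℝ (Fin d))
    (δ : ℝ) (hδ0 : 0 < δ) (hδ1 : δ ≤ 1)
    (S : Ω → Matrix (Fin d) (Fin d) ℝ)
    (hSsqint : Integrable (fun t => frobSq (S t - (G y - L))))
    (hScontr : (∫ t, frobSq (S t - (G y - L))) ≤ (1 - δ) * frobSq (G y - L)) :
    (∫ t, frobSq (L + S t - G z))
      ≤ (1 - δ / 4) * frobSq (L - G z) + (6 / δ - 7 / 2) * M₁ ^ 2 * ‖y - z‖ ^ 2 := by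
  have hB : frobSq (G y - G z) ≤ M₁ ^ 2 * ‖y - z‖ ^ 2 := by
    have h := hG y z
    rw [frobNorm] at h
    have h2 := pow_le_pow_left₀ (Real.sqrt_nonneg _) h 2
    rw [Real.sq_sqrt (frobSq_nonneg' _)] at h2
    linarith [mul_pow M₁ ‖y - z‖ 2]
  have hB0 := frobSq_nonneg' (G y - G z)
  have hX0 := frobSq_nonneg' (L - G z)
  have hneg : frobSq (G z - L) = frobSq (L - G z) := by
    unfold frobSq
    refine Finset.sum_congr rfl fun i _ => Finset.sum_congr rfl fun j _ => ?_
    simp only [Matrix.sub_apply]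
    ring
  have key : ∀ a : ℝ, 0 < a → (∫ t, frobSq (L + S t - G z)) ≤
      (1 + a) * ((1 - δ) * frobSq (G y - L)) + (1 + 1 / a) * frobSq (G y - G z) := by
    intro a ha
    have h1 : (∫ t, frobSq (L + S t - G z)) ≤
        ∫ t, ((1 + a) * frobSq (S t - (G y - L)) + (1 + 1 / a) * frobSq (G y - G z)) := by
      refine integral_mono_of_nonneg (Filter.Eventually.of_forall fun t => frobSq_nonneg' _)
        ((hSsqint.const_mul _).add (integrable_const _))
        (Filter.Eventually.of_forall fun t => ?_)
      have e : L + S t - G z = (S t - (G y - L)) + (G y - G z) := by abel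
      simp only [e]
      exact frobSq_young _ _ a ha
    rw [integral_add (hSsqint.const_mul _) (integrable_const _), integral_const_mul] at h1
    simp only [integral_const, probReal_univ, one_smul] at h1
    have := mul_le_mul_of_nonneg_left hScontr (by linarith : 0 ≤ 1 + a)
    linarith
  have hfin : (6 / δ - 7 / 2) * frobSq (G y - G z)
      ≤ (6 / δ - 7 / 2) * M₁ ^ 2 * ‖y - z‖ ^ 2 := by
    have : 6 ≤ 6 / δ := by rw [le_div_iff₀ hδ0]; linarith
    rw [mul_assoc]
    exact mul_le_mul_of_nonneg_left hB (by linarith)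
  refine le_trans ?_ (add_le_add_right hfin _)
  rcases hδ1.eq_or_lt with rfl | hlt
  · have := key 1 one_pos
    norm_num at this ⊢
    linarith
  · have h1 := key (δ / (2 * (1 - δ))) (div_pos hδ0 (by linarith))
    have hc : 0 < δ / (4 - 2 * δ) := div_pos hδ0 (by linarith)
    have h2 := frobSq_young (G z - L) (G y - G z) _ hc
    rw [hneg, show G z - L + (G y - G z) = G y - L by abel] at h2
    have n1 : 1 - δ ≠ 0 := by linarith
    have n2 : 4 - 2 * δ ≠ 0 := by linarith
    have e1 : (1 + δ / (2 * (1 - δ))) * ((1 - δ) * frobSq (G y - L))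
        = (1 - δ / 2) * frobSq (G y - L) := by
      field_simp
      ring
    have e2 : 1 + 1 / (δ / (2 * (1 - δ))) = 2 / δ - 1 := by
      field_simp
      ring
    have e3 : (1 - δ / 2) * (1 + δ / (4 - 2 * δ)) = 1 - δ / 4 := by
      have : δ / (4 - 2 * δ) * (4 - 2 * δ) = δ := div_mul_cancel₀ _ n2
      linear_combination this / 4
    have e4 : (1 - δ / 2) * (1 + 1 / (δ / (4 - 2 * δ))) = 4 / δ - 3 + δ / 2 := by
      rw [one_div_div]
      field_simp
      ring
    have h3 := mul_le_mul_of_nonneg_left h2 (by linarith : 0 ≤ 1 - δ / 2)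
    rw [mul_add, ← mul_assoc, ← mul_assoc, e3, e4] at h3
    rw [e1, e2] at h1
    have h4 : 0 ≤ (1 - δ) * frobSq (G y - G z) := mul_nonneg (by linarith) hB0
    have e5 : (6 / δ - 7 / 2) = (2 / δ - 1) + (4 / δ - 3 + δ / 2) + (1 - δ) / 2 := by ring
    rw [e5]
    linarith
end

section
/- Let f : ℝ^d → ℝ be twice continuously differentiable with ∇f(x*) = 0 for some x* ∈ ℝ^d, and suppose ‖∇²f(x) − ∇²f(y)‖ ≤ H‖x − y‖ (spectral norm) for all x, y. Let μ > 0 and let Ĥ be a symmetric d×d matrix with Ĥ ⪰ μI. Then Ĥ is invertible and the Newton-type step x⁺ := z − Ĥ⁻¹∇f(z) satisfies, for every z ∈ ℝ^d, ‖x⁺ − x*‖² ≤ (1/μ²)·( (H²/2)‖z − x*‖⁴ + 2‖Ĥ − ∇²f(x*)‖_F² ‖z − x*‖² ). -/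
open Matrix

/-- Spectral norm (operator 2-norm) of a matrix. -/
noncomputable def specNorm {d : ℕ} (M : Matrix (Fin d) (Fin d) ℝ) : ℝ :=
  ‖Matrix.toEuclideanCLM (𝕜 := ℝ) M‖

/-- The Hessian matrix of `f` at `x` (the derivative of the gradient). -/
noncomputable def hess {d : ℕ} (f : EuclideanSpace ℝ (Fin d) → ℝ)
    (x : EuclideanSpace ℝ (Fin d)) : Matrix (Fin d) (Fin d) ℝ :=
  fun j l => fderiv ℝ (gradient f) x (EuclideanSpace.single l 1) j

lemma aux_lower {d : ℕ} {μ : ℝ} {A : Matrix (Fin d) (Fin d) ℝ}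
    (hpd : (A - μ • (1 : Matrix (Fin d) (Fin d) ℝ)).PosSemidef)
    (v : EuclideanSpace ℝ (Fin d)) :
    μ * ‖v‖ ≤ ‖Matrix.toEuclideanCLM (𝕜 := ℝ) A v‖ := by
  have h1 := hpd.dotProduct_mulVec_nonneg v.ofLp
  have h2 : 0 ≤ inner ℝ v (Matrix.toEuclideanCLM (𝕜 := ℝ)
      (A - μ • (1 : Matrix (Fin d) (Fin d) ℝ)) v) := by
    rw [Matrix.inner_toEuclideanCLM]
    simpa using h1
  rw [map_sub, map_smul, map_one, _root_.sub_apply, inner_sub_right,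
    _root_.smul_apply, one_apply_eq_self, inner_smul_right,
    real_inner_self_eq_norm_sq] at h2
  have h3 := real_inner_le_norm v (Matrix.toEuclideanCLM (𝕜 := ℝ) A v)
  rcases (norm_nonneg v).eq_or_lt with h | h
  · rw [← h]; simp
  · nlinarith

lemma aux_frob {d : ℕ} (M : Matrix (Fin d) (Fin d) ℝ) (v : EuclideanSpace ℝ (Fin d)) :
    ‖Matrix.toEuclideanCLM (𝕜 := ℝ) M v‖ ^ 2 ≤ frobSq M * ‖v‖ ^ 2 := by
  rw [EuclideanSpace.real_norm_sq_eq, EuclideanSpace.real_norm_sq_eq, frobSq, Finset.sum_mul]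
  refine Finset.sum_le_sum fun i _ => ?_
  rw [Matrix.ofLp_toEuclideanCLM]
  exact Finset.sum_mul_sq_le_sq_mul_sq Finset.univ (fun j => M i j) (fun j => v j)

lemma aux_hess {d : ℕ} (f : EuclideanSpace ℝ (Fin d) → ℝ) (x : EuclideanSpace ℝ (Fin d)) :
    Matrix.toEuclideanCLM (𝕜 := ℝ) (hess f x) = fderiv ℝ (gradient f) x := by
  apply ContinuousLinearMap.coe_injective
  refine (EuclideanSpace.basisFun (Fin d) ℝ).toBasis.ext fun l => ?_
  ext j
  simp [Matrix.ofLp_toEuclideanCLM, hess]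

lemma aux_diff {d : ℕ} {f : EuclideanSpace ℝ (Fin d) → ℝ} (hf : ContDiff ℝ 2 f) :
    Differentiable ℝ (gradient f) := by
  have h : ContDiff ℝ 1 (fderiv ℝ f) := hf.fderiv_right (by norm_num)
  have h2 : Differentiable ℝ (fderiv ℝ f) := h.differentiable (by norm_num)
  exact (InnerProductSpace.toDual ℝ (EuclideanSpace ℝ (Fin d))).symm.differentiable.comp h2

lemma aux_taylor {d : ℕ} {f : EuclideanSpace ℝ (Fin d) → ℝ} (hf : ContDiff ℝ 2 f)
    {H : ℝ} (hH : ∀ x y, specNorm (hess f x - hess f y) ≤ H * ‖x - y‖)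
    (x e : EuclideanSpace ℝ (Fin d)) :
    ‖gradient f (x + e) - gradient f x - Matrix.toEuclideanCLM (𝕜 := ℝ) (hess f x) e‖
      ≤ H / 2 * ‖e‖ ^ 2 := by
  set B := Matrix.toEuclideanCLM (𝕜 := ℝ) (hess f x) with hB
  have hd : ∀ t : ℝ, HasDerivAt (fun t : ℝ => gradient f (x + t • e) - gradient f x - t • B e)
      (fderiv ℝ (gradient f) (x + t • e) e - B e) t := by
    intro t
    have h1 : HasDerivAt (fun t : ℝ => x + t • e) e t := by
      simpa using ((hasDerivAt_id t).smul_const e).const_add x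
    have h2 := (aux_diff hf (x + t • e)).hasFDerivAt.comp_hasDerivAt t h1
    have h3 : HasDerivAt (fun t : ℝ => t • B e) (B e) t := by
      simpa using (hasDerivAt_id t).smul_const (B e)
    exact (h2.sub_const _).sub h3
  have hq : ∀ t : ℝ, HasDerivAt (fun t : ℝ => H / 2 * ‖e‖ ^ 2 * t ^ 2) (H * ‖e‖ ^ 2 * t) t := by
    intro t
    refine ((hasDerivAt_pow 2 t).const_mul (H / 2 * ‖e‖ ^ 2)).congr_deriv ?_
    norm_num
    ring
  have key := image_norm_le_of_norm_deriv_right_le_deriv_boundary (a := 0) (b := 1)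
    (fun t _ => (hd t).continuousAt.continuousWithinAt)
    (fun t _ => (hd t).hasDerivWithinAt) (by simp) hq (by
      intro t ht
      rw [← aux_hess, hB, ← _root_.sub_apply, ← map_sub]
      refine (ContinuousLinearMap.le_opNorm _ _).trans ?_
      have := hH (x + t • e) x
      rw [specNorm, add_sub_cancel_left, norm_smul, Real.norm_of_nonneg ht.1] at this
      nlinarith [norm_nonneg e]) (x := 1) (by simp)
  simpa using key

/-- The one-step estimate for a Newton-type step `x⁺ = z − Hhat⁻¹∇f(z)` with a symmetric
estimator `Hhat ⪰ μI` of the Hessian. -/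
theorem newton_type_step_bound (d : ℕ)
    (f : EuclideanSpace ℝ (Fin d) → ℝ) (hf : ContDiff ℝ 2 f)
    (xstar : EuclideanSpace ℝ (Fin d)) (hstar : gradient f xstar = 0)
    (H : ℝ) (hH : ∀ x y, specNorm (hess f x - hess f y) ≤ H * ‖x - y‖)
    (μ : ℝ) (hμ : 0 < μ)
    (Hhat : Matrix (Fin d) (Fin d) ℝ) (hsymm : Hhat.IsSymm)
    (hpd : (Hhat - μ • (1 : Matrix (Fin d) (Fin d) ℝ)).PosSemidef) :
    IsUnit Hhat ∧
    ∀ z : EuclideanSpace ℝ (Fin d),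
      ‖(z - Matrix.toEuclideanCLM (𝕜 := ℝ) Hhat⁻¹ (gradient f z)) - xstar‖ ^ 2
        ≤ (1 / μ ^ 2) * ((H ^ 2 / 2) * ‖z - xstar‖ ^ 4
            + 2 * frobSq (Hhat - hess f xstar) * ‖z - xstar‖ ^ 2) := by
  have hu : IsUnit Hhat := by
    rw [← Matrix.mulVec_injective_iff_isUnit]
    intro a b hab
    have h := aux_lower hpd (WithLp.toLp 2 (a - b))
    rw [Matrix.toEuclideanCLM_toLp, Matrix.mulVec_sub, sub_eq_zero.mpr hab] at h
    have h0 : ‖WithLp.toLp 2 (a - b)‖ = 0 := by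
      have : μ * ‖WithLp.toLp 2 (a - b)‖ ≤ 0 := by simpa using h
      have := norm_nonneg (WithLp.toLp 2 (a - b))
      nlinarith
    have h1 := norm_eq_zero.mp h0
    exact sub_eq_zero.mp (by simpa using congrArg WithLp.ofLp h1)
  refine ⟨hu, fun z => ?_⟩
  set g := gradient f z with hg
  set v := (z - Matrix.toEuclideanCLM (𝕜 := ℝ) Hhat⁻¹ g) - xstar with hv
  set e := z - xstar with he
  have hinv : Matrix.toEuclideanCLM (𝕜 := ℝ) Hhat (Matrix.toEuclideanCLM (𝕜 := ℝ) Hhat⁻¹ g) = g := by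
    rw [← mul_apply_eq_comp, ← map_mul,
      Matrix.mul_nonsing_inv _ ((Matrix.isUnit_iff_isUnit_det _).mp hu), map_one,
      one_apply_eq_self]
  have ht := aux_taylor hf hH xstar e
  rw [hstar, sub_zero, he, add_sub_cancel, ← he, ← hg] at ht
  have hF := aux_frob (Hhat - hess f xstar) e
  have hAv : Matrix.toEuclideanCLM (𝕜 := ℝ) Hhat v
      = Matrix.toEuclideanCLM (𝕜 := ℝ) (Hhat - hess f xstar) e
        - (g - Matrix.toEuclideanCLM (𝕜 := ℝ) (hess f xstar) e) := by
    have : v = e - Matrix.toEuclideanCLM (𝕜 := ℝ) Hhat⁻¹ g := by rw [hv, he]; abel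
    rw [this, map_sub, hinv, map_sub _ Hhat (hess f xstar), _root_.sub_apply]; abel
  have hl := aux_lower hpd v
  rw [hAv] at hl
  have hl2 := hl.trans (norm_sub_le _ _)
  set p := ‖Matrix.toEuclideanCLM (𝕜 := ℝ) (Hhat - hess f xstar) e‖
  set q := ‖g - Matrix.toEuclideanCLM (𝕜 := ℝ) (hess f xstar) e‖ with hq
  have hq0 : 0 ≤ q := norm_nonneg _
  have hq2 : q ^ 2 ≤ (H / 2 * ‖e‖ ^ 2) ^ 2 := pow_le_pow_left₀ hq0 ht 2
  have hm : (μ * ‖v‖) ^ 2 ≤ (p + q) ^ 2 := pow_le_pow_left₀ (by positivity) hl2 2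
  rw [one_div, ← div_eq_inv_mul, le_div_iff₀ (by positivity)]
  nlinarith [sq_nonneg (p - q)]
end

section
/- Let J be a finite nonempty index set, let c > 0 and γ ∈ ℝ, and let (h_j)_{j∈J}, (ℓ_j)_{j∈J}, (h*_j)_{j∈J} be real numbers with ℓ_j + 2γ ≥ c for all j ∈ J. Set β := max_{j∈J} (h_j + 2γ)/(ℓ_j + 2γ). Then |β − 1|² ≤ (2/c²) max_{j∈J} |h_j − h*_j|² + (2/c²) Σ_{j∈J} |ℓ_j − h*_j|². -/
open Finset

/-- The BL3 bound on the deviation of `β = max_j (h_j + 2γ)/(ℓ_j + 2γ)` from 1. -/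
theorem bl3_beta_deviation_bound (J : Type*) [Fintype J] [Nonempty J]
    (c : ℝ) (hc : 0 < c) (γ : ℝ)
    (h ℓ hstar : J → ℝ) (hge : ∀ j, c ≤ ℓ j + 2 * γ)
    (β : ℝ)
    (hβ : β = Finset.univ.sup' Finset.univ_nonempty
      (fun j => (h j + 2 * γ) / (ℓ j + 2 * γ))) :
    |β - 1| ^ 2 ≤ (2 / c ^ 2) *
        (Finset.univ.sup' Finset.univ_nonempty (fun j => |h j - hstar j| ^ 2))
      + (2 / c ^ 2) * ∑ j, |ℓ j - hstar j| ^ 2 := by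
  obtain ⟨j, -, hj⟩ := Finset.exists_mem_eq_sup' (Finset.univ_nonempty (α := J))
    (fun j => (h j + 2 * γ) / (ℓ j + 2 * γ))
  have h1 : |h j - hstar j| ^ 2 ≤
      Finset.univ.sup' Finset.univ_nonempty (fun j => |h j - hstar j| ^ 2) :=
    Finset.le_sup' (fun j => |h j - hstar j| ^ 2) (Finset.mem_univ j)
  have h2 : |ℓ j - hstar j| ^ 2 ≤ ∑ j, |ℓ j - hstar j| ^ 2 :=
    Finset.single_le_sum (f := fun j => |ℓ j - hstar j| ^ 2)
      (fun i _ => by positivity) (Finset.mem_univ j)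
  have hp : 0 < ℓ j + 2 * γ := lt_of_lt_of_le hc (hge j)
  have hb : β - 1 = (h j - ℓ j) / (ℓ j + 2 * γ) := by
    rw [hβ, hj]
    field_simp
    ring
  have h3 : |β - 1| ^ 2 ≤ (h j - ℓ j) ^ 2 / c ^ 2 := by
    rw [sq_abs, hb, div_pow]
    have := hge j
    gcongr
  have h4 : (h j - ℓ j) ^ 2 ≤ 2 * (|h j - hstar j| ^ 2 + |ℓ j - hstar j| ^ 2) := by
    rw [sq_abs, sq_abs]
    nlinarith [sq_nonneg ((h j - hstar j) + (ℓ j - hstar j))]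
  calc |β - 1| ^ 2 ≤ (h j - ℓ j) ^ 2 / c ^ 2 := h3
    _ ≤ (2 * (|h j - hstar j| ^ 2 + |ℓ j - hstar j| ^ 2)) / c ^ 2 := by gcongr
    _ = (2 / c ^ 2) * |h j - hstar j| ^ 2 + (2 / c ^ 2) * |ℓ j - hstar j| ^ 2 := by ring
    _ ≤ _ := by gcongr
end
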